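/- Let (ϱ,ς) be a direction with ϱ > 0 and ϱ + ς < 0, and let R, G ∈ K[x,y] be (ϱ,ς)-homogeneous polynomials such that R is not a monomial and [G,R] = R^i for some integer i ≥ 1. Set u := v_{ϱ,ς}(R), write (υ₂,ν₂) := st_{ϱ,ς}(R) and (υ₁,ν₁) := en_{ϱ,ς}(R) − st_{ϱ,ς}(R), and put N₁ := gcd(υ₁,ν₁), N₂ := gcd(υ₂,ν₂). Assume there is a positive integer ℓ with ℓ·u + ϱ + ς > 0. Then at least one of the following holds: (1) ϱ = 1 and there exist ξ, λ ∈ K∖{0}, an integer j ≥ 1 and c ∈ ℕ such that R = ξ·x^c·(x^{−ς}y − λ)^j; (2) there exist integers s, t′ with 1 ≤ s ≤ N₁ and 0 < t′ < ℓ·s such that t′·(ϱυ₂ + ςν₂) + s·(ϱ + ς) = 0 (i.e. the direction (ϱ,ς), up to sign, annihilates the point t′·st_{ϱ,ς}(R) + s·(1,1)); (3) there exist integers γ, t′ with γ ≥ 1, γ ∣ N₂ and 0 < t′ < ℓ·γ such that t′·(ϱυ₂ + ςν₂) + γ·(ϱ + ς) = 0. -/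

import Mathlib

open MvPolynomial

noncomputable section

variable {K : Type*} [Field K] [CharZero K]

/-- The support of `P` as a set of pairs `(i,j)` of exponents of `x^i y^j`. -/
def Supp (P : MvPolynomial (Fin 2) K) : Set (ℕ × ℕ) :=
  {p | MvPolynomial.coeff (Finsupp.single 0 p.1 + Finsupp.single 1 p.2) P ≠ 0}

/-- The Jacobian bracket `[P,Q] = ∂ₓP ∂_yQ − ∂ₓQ ∂_yP`. -/
def Jb (P Q : MvPolynomial (Fin 2) K) : MvPolynomial (Fin 2) K :=
  pderiv 0 P * pderiv 1 Q - pderiv 0 Q * pderiv 1 P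

/-- The `(ρ,σ)`-degree `v_{ρ,σ}(P)` (the maximum of `ρi+σj` on the support). -/
def wdeg (ρ σ : ℤ) (P : MvPolynomial (Fin 2) K) : ℤ :=
  sSup {d : ℤ | ∃ p ∈ Supp P, d = ρ * (p.1 : ℤ) + σ * (p.2 : ℤ)}

/-- The support of the `(ρ,σ)`-leading form of `P`. -/
def LeadSupp (ρ σ : ℤ) (P : MvPolynomial (Fin 2) K) : Set (ℕ × ℕ) :=
  {p | p ∈ Supp P ∧ ρ * (p.1 : ℤ) + σ * (p.2 : ℤ) = wdeg ρ σ P}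

/-- `P` is `(ρ,σ)`-homogeneous. -/
def IsHomog (ρ σ : ℤ) (P : MvPolynomial (Fin 2) K) : Prop :=
  ∀ p ∈ Supp P, ∀ q ∈ Supp P,
    ρ * (p.1 : ℤ) + σ * (p.2 : ℤ) = ρ * (q.1 : ℤ) + σ * (q.2 : ℤ)

/-- `P` is a monomial: its support has at most one point. -/
def IsMonomial (P : MvPolynomial (Fin 2) K) : Prop := (Supp P).Subsingleton

/-- `e` is the point `en_{ρ,σ}(P)`: the point of the support of the leading form
with largest second coordinate. -/
def IsEn (ρ σ : ℤ) (P : MvPolynomial (Fin 2) K) (e : ℕ × ℕ) : Prop :=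
  e ∈ LeadSupp ρ σ P ∧ ∀ q ∈ LeadSupp ρ σ P, q.2 ≤ e.2

/-- `e` is the point `st_{ρ,σ}(P)`: the point of the support of the leading form
with smallest second coordinate. -/
def IsSt (ρ σ : ℤ) (P : MvPolynomial (Fin 2) K) (e : ℕ × ℕ) : Prop :=
  e ∈ LeadSupp ρ σ P ∧ ∀ q ∈ LeadSupp ρ σ P, e.2 ≤ q.2

/- Setting `x = 1` turns `[G, R] = R ^ i` into the univariate equation
`w g r' - u r g' = ϱ r ^ i`, where `u` and `w` are the weights of `R` and `G`; comparing weights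
gives `w = (i - 1) u + ϱ + ς`. Looking at this equation at a point `a`, and at infinity, shows that
either the orders `m`, `n` of `r`, `g` there are proportional, `w m = u n`, or
`n = (i - 1) m + 1`. The degree of `g` leaves no room for the second alternative both at `0` and at
a nonzero root of `r`, so `w m = u n` at `0` or at some nonzero root of `r`, whence
`u ∣ m (ϱ + ς)`. Since `r = y ^ ν₂ f(y ^ ϱ)` with `deg f = N₁`, nonzero roots have multiplicity at
most `N₁`, which gives (2). At `0` the proportionality says that `u` divides `w υ₂` and `w ν₂`,
hence `w N₂`, which gives (3). -/

open Polynomial (derivative)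
open scoped Polynomial

section Univariate

variable {A : Type*} [CommRing A]

lemma coeff_X_mul_derivative (p : A[X]) (n : ℕ) :
    (Polynomial.X * derivative p).coeff n = n * p.coeff n := by
  cases n with
  | zero => simp
  | succ n => rw [Polynomial.coeff_X_mul, Polynomial.coeff_derivative, mul_comm, Nat.cast_succ]

lemma natDegree_X_mul_derivative_le (p : A[X]) :
    (Polynomial.X * derivative p).natDegree ≤ p.natDegree :=
  Polynomial.natDegree_le_iff_coeff_eq_zero.mpr fun n hn => by
    rw [coeff_X_mul_derivative, Polynomial.coeff_eq_zero_of_natDegree_lt hn, mul_zero]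

lemma rootMultiplicity_pow [IsDomain A] (p : A[X]) (n : ℕ) (a : A) :
    (p ^ n).rootMultiplicity a = n * p.rootMultiplicity a := by
  classical
  rw [← Polynomial.count_roots, Polynomial.roots_pow, Multiset.count_nsmul, Polynomial.count_roots]

lemma X_sub_C_mul_derivative_X_sub_C_pow_mul (a : A) (m : ℕ) (q : A[X]) :
    (Polynomial.X - Polynomial.C a) * derivative ((Polynomial.X - Polynomial.C a) ^ m * q) =
      (Polynomial.X - Polynomial.C a) ^ m *
        (Polynomial.C (m : A) * q + (Polynomial.X - Polynomial.C a) * derivative q) := by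
  rw [Polynomial.derivative_mul, Polynomial.derivative_X_sub_C_pow]
  cases m with
  | zero => simp
  | succ m =>
    rw [Nat.add_sub_cancel]
    ring

/-- The Wronskian of `g` and `r` twisted by weights `α` of `g` and `β` of `r`. It is, up to a
constant, what the Jacobian bracket of weighted homogeneous polynomials of these weights becomes on
the line `x = 1`. -/
def weightedWronskian (α β : A) (g r : A[X]) : A[X] :=
  Polynomial.C α * g * derivative r - Polynomial.C β * r * derivative g

lemma rootMultiplicity_X_sub_C_mul_weightedWronskian [IsDomain A] {α β a : A} {g r : A[X]}
    (hg : g ≠ 0) (hr : r ≠ 0) (h : α * r.rootMultiplicity a ≠ β * g.rootMultiplicity a) :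
    ((Polynomial.X - Polynomial.C a) * weightedWronskian α β g r).rootMultiplicity a =
      r.rootMultiplicity a + g.rootMultiplicity a := by
  obtain ⟨r₁, hr₁, hr₁a⟩ := Polynomial.exists_eq_pow_rootMultiplicity_mul_and_not_dvd r hr a
  obtain ⟨g₁, hg₁, hg₁a⟩ := Polynomial.exists_eq_pow_rootMultiplicity_mul_and_not_dvd g hg a
  rw [Polynomial.dvd_iff_isRoot] at hr₁a hg₁a
  generalize r.rootMultiplicity a = m at *
  generalize g.rootMultiplicity a = n at *
  set T : A[X] := Polynomial.X - Polynomial.C a with hT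
  set Q : A[X] := Polynomial.C α * g₁ * (Polynomial.C (m : A) * r₁ + T * derivative r₁) -
    Polynomial.C β * r₁ * (Polynomial.C (n : A) * g₁ + T * derivative g₁) with hQ
  have hfactor : T * weightedWronskian α β g r = Q * T ^ (m + n) := by
    have hr' := X_sub_C_mul_derivative_X_sub_C_pow_mul a m r₁
    have hg' := X_sub_C_mul_derivative_X_sub_C_pow_mul a n g₁
    rw [weightedWronskian, hr₁, hg₁]
    linear_combination Polynomial.C α * (T ^ n * g₁) * hr' - Polynomial.C β * (T ^ m * r₁) * hg'
  have hQa : Q.eval a = (α * m - β * n) * (r₁.eval a * g₁.eval a) := by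
    simp only [hQ, hT, Polynomial.eval_sub, Polynomial.eval_add, Polynomial.eval_mul,
      Polynomial.eval_C, Polynomial.eval_X]
    ring
  have hQ_root : ¬ Q.IsRoot a := by
    rw [Polynomial.IsRoot, hQa]
    exact mul_ne_zero (sub_ne_zero.mpr h) (mul_ne_zero hr₁a hg₁a)
  have hQ0 : Q ≠ 0 := by
    intro h0
    simp [h0] at hQ_root
  rw [hfactor, Polynomial.rootMultiplicity_mul_X_sub_C_pow hQ0,
    Polynomial.rootMultiplicity_eq_zero hQ_root, zero_add]

lemma natDegree_X_mul_weightedWronskian [IsDomain A] {α β : A} {g r : A[X]}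
    (hg : g ≠ 0) (hr : r ≠ 0) (h : α * r.natDegree ≠ β * g.natDegree) :
    (Polynomial.X * weightedWronskian α β g r).natDegree = r.natDegree + g.natDegree := by
  have hsplit : Polynomial.X * weightedWronskian α β g r =
      Polynomial.C α * ((Polynomial.X * derivative r) * g) -
        Polynomial.C β * (r * (Polynomial.X * derivative g)) := by
    rw [weightedWronskian]
    ring
  have hr' := natDegree_X_mul_derivative_le r
  have hg' := natDegree_X_mul_derivative_le g
  refine Polynomial.natDegree_eq_of_le_of_coeff_ne_zero ?_ ?_
  · rw [hsplit]
    exact (Polynomial.natDegree_sub_le_of_le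
      ((Polynomial.natDegree_C_mul_le _ _).trans (Polynomial.natDegree_mul_le_of_le hr' le_rfl))
      ((Polynomial.natDegree_C_mul_le _ _).trans
        (Polynomial.natDegree_mul_le_of_le le_rfl hg'))).trans (max_self _).le
  · have hcoeff : (Polynomial.X * weightedWronskian α β g r).coeff (r.natDegree + g.natDegree) =
        (α * r.natDegree - β * g.natDegree) * (r.leadingCoeff * g.leadingCoeff) := by
      rw [hsplit, Polynomial.coeff_sub, Polynomial.coeff_C_mul, Polynomial.coeff_C_mul,
        Polynomial.coeff_mul_add_eq_of_natDegree_le hr' le_rfl,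
        Polynomial.coeff_mul_add_eq_of_natDegree_le le_rfl hg',
        coeff_X_mul_derivative, coeff_X_mul_derivative]
      simp only [Polynomial.coeff_natDegree]
      ring
    rw [hcoeff]
    exact mul_ne_zero (sub_ne_zero.mpr h) (mul_ne_zero (Polynomial.leadingCoeff_ne_zero.mpr hr)
      (Polynomial.leadingCoeff_ne_zero.mpr hg))

section Equation

variable [IsDomain A] {α β κ : A} {g r : A[X]} {k : ℕ}

lemma rootMultiplicity_of_weightedWronskian_eq (hκ : κ ≠ 0) (hg : g ≠ 0) (hr : r ≠ 0)
    (hW : weightedWronskian α β g r = Polynomial.C κ * r ^ (k + 1)) {a : A}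
    (h : α * r.rootMultiplicity a ≠ β * g.rootMultiplicity a) :
    g.rootMultiplicity a = k * r.rootMultiplicity a + 1 := by
  have hmul := rootMultiplicity_X_sub_C_mul_weightedWronskian hg hr h
  have hC : (Polynomial.C κ).rootMultiplicity a = 0 := Polynomial.rootMultiplicity_C κ a
  have hne : Polynomial.C κ * r ^ (k + 1) ≠ 0 :=
    mul_ne_zero (Polynomial.C_ne_zero.mpr hκ) (pow_ne_zero _ hr)
  rw [hW, Polynomial.rootMultiplicity_mul (mul_ne_zero (Polynomial.X_sub_C_ne_zero a) hne),
    Polynomial.rootMultiplicity_mul hne, Polynomial.rootMultiplicity_X_sub_C_self, hC,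
    rootMultiplicity_pow] at hmul
  linarith

lemma natDegree_of_weightedWronskian_eq (hκ : κ ≠ 0) (hg : g ≠ 0) (hr : r ≠ 0)
    (hW : weightedWronskian α β g r = Polynomial.C κ * r ^ (k + 1))
    (h : α * r.natDegree ≠ β * g.natDegree) :
    g.natDegree = k * r.natDegree + 1 := by
  have hdeg := natDegree_X_mul_weightedWronskian hg hr h
  have hne : Polynomial.C κ * r ^ (k + 1) ≠ 0 :=
    mul_ne_zero (Polynomial.C_ne_zero.mpr hκ) (pow_ne_zero _ hr)
  rw [hW, Polynomial.natDegree_X_mul hne, Polynomial.natDegree_C_mul hκ,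
    Polynomial.natDegree_pow] at hdeg
  linarith

end Equation

section CharZero

variable [IsDomain A] [CharZero A] {w u : ℤ} {κ : A} {g r : A[X]} {k : ℕ}

lemma natDegree_le_of_weightedWronskian_eq (hu : 0 < u) (hw : w < k * u) (hκ : κ ≠ 0)
    (hg : g ≠ 0) (hr : r ≠ 0)
    (hW : weightedWronskian (w : A) (u : A) g r = Polynomial.C κ * r ^ (k + 1)) :
    g.natDegree ≤ k * r.natDegree + 1 := by
  by_cases h : w * r.natDegree = u * g.natDegree
  · have hle : u * (g.natDegree : ℤ) ≤ u * (k * r.natDegree : ℕ) := by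
      rw [← h]
      push_cast
      nlinarith
    exact Nat.le_succ_of_le (by exact_mod_cast le_of_mul_le_mul_left hle hu)
  · exact (natDegree_of_weightedWronskian_eq hκ hg hr hW (by exact_mod_cast h)).le

theorem exists_rootMultiplicity_proportional (hu : 0 < u) (hw : w < k * u) (hκ : κ ≠ 0)
    (hg : g ≠ 0) (hr : r ≠ 0) (hsplit : r.Splits)
    (hW : weightedWronskian (w : A) (u : A) g r = Polynomial.C κ * r ^ (k + 1))
    {a b : A} (hab : a ≠ b) :
    ∃ c, (c = a ∨ c = b ∨ r.IsRoot c) ∧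
      w * r.rootMultiplicity c = u * g.rootMultiplicity c := by
  classical
  by_contra! hcon
  have hmult (c : A) (hc : c = a ∨ c = b ∨ r.IsRoot c) :
      g.rootMultiplicity c = k * r.rootMultiplicity c + 1 :=
    rootMultiplicity_of_weightedWronskian_eq hκ hg hr hW (by exact_mod_cast hcon c hc)
  have hroots : k • r.roots + {a, b} ≤ g.roots := by
    rw [Multiset.le_iff_count]
    intro c
    rw [Multiset.count_add, Multiset.count_nsmul, Polynomial.count_roots, Polynomial.count_roots]
    by_cases hc : c = a ∨ c = b ∨ r.IsRoot c
    · have hnodup : ({a, b} : Multiset A).Nodup := by simpa using hab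
      rw [hmult c hc]
      exact Nat.add_le_add_left (Multiset.nodup_iff_count_le_one.mp hnodup c) _
    · push Not at hc
      simp [hc.1, hc.2.1, Polynomial.rootMultiplicity_eq_zero hc.2.2]
  have hcard : k * r.natDegree + 2 ≤ g.natDegree := by
    rw [hsplit.natDegree_eq_card_roots]
    simpa only [Multiset.card_add, Multiset.card_nsmul, Multiset.card_pair] using
      (Multiset.card_le_card hroots).trans g.card_roots'
  have hdeg := natDegree_le_of_weightedWronskian_eq hu hw hκ hg hr hW
  omega

end CharZero

lemma exists_ne_zero_isRoot [IsDomain A] {p : A[X]} (hp : p.Splits)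
    (h : p.natTrailingDegree < p.natDegree) : ∃ a, a ≠ 0 ∧ p.IsRoot a := by
  classical
  by_contra! hcon
  have hroots : p.roots = Multiset.replicate p.natDegree 0 :=
    Multiset.eq_replicate.mpr ⟨hp.natDegree_eq_card_roots.symm, fun a ha => by
      by_contra ha0
      exact hcon a ha0 (Polynomial.isRoot_of_mem_roots ha)⟩
  have hcount := p.count_roots (a := 0)
  rw [hroots, Multiset.count_replicate_self,
    Polynomial.rootMultiplicity_eq_natTrailingDegree'] at hcount
  omega

lemma exists_eq_X_pow_mul_expand {p : A[X]} {n ρ : ℕ} (hρ : ρ ≠ 0)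
    (h : ∀ j, p.coeff j ≠ 0 → ∃ k, j = n + ρ * k) :
    ∃ f, p = Polynomial.X ^ n * Polynomial.expand A ρ f := by
  obtain ⟨q, rfl⟩ : Polynomial.X ^ n ∣ p := by
    rw [Polynomial.X_pow_dvd_iff]
    intro d hd
    by_contra hne
    obtain ⟨k, rfl⟩ := h d hne
    omega
  refine ⟨Polynomial.contract ρ q, ?_⟩
  congr 1
  ext j
  rw [Polynomial.coeff_expand hρ.bot_lt, Polynomial.coeff_contract hρ]
  split_ifs with hj
  · rw [Nat.div_mul_cancel hj]
  · by_contra hne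
    obtain ⟨k, hk⟩ := h (j + n) (by rwa [Polynomial.coeff_X_pow_mul])
    exact hj ⟨k, by omega⟩

lemma rootMultiplicity_expand_of_ne_zero {F : Type*} [Field F] {ρ : ℕ} (hρ : (ρ : F) ≠ 0)
    {f : F[X]} {a : F} (ha : a ≠ 0) :
    (Polynomial.expand F ρ f).rootMultiplicity a = f.rootMultiplicity (a ^ ρ) := by
  obtain rfl | hf := eq_or_ne f 0
  · simp
  have hρ_pos : 0 < ρ := Nat.pos_of_ne_zero fun h => hρ (by rw [h, Nat.cast_zero])
  obtain ⟨q, hq, hqa⟩ :=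
    Polynomial.exists_eq_pow_rootMultiplicity_mul_and_not_dvd f hf (a ^ ρ)
  rw [Polynomial.dvd_iff_isRoot] at hqa
  generalize f.rootMultiplicity (a ^ ρ) = m at *
  have hexpand : Polynomial.expand F ρ f =
      (Polynomial.X ^ ρ - Polynomial.C (a ^ ρ)) ^ m * Polynomial.expand F ρ q := by
    simp [hq]
  have hsimple : (Polynomial.X ^ ρ - Polynomial.C (a ^ ρ)).rootMultiplicity a = 1 :=
    le_antisymm
      (Polynomial.rootMultiplicity_le_one_of_separable
        (Polynomial.separable_X_pow_sub_C _ hρ (pow_ne_zero _ ha)) a)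
      ((Polynomial.rootMultiplicity_pos (Polynomial.X_pow_sub_C_ne_zero hρ_pos _)).mpr
        (by simp))
  have hq_expand : (Polynomial.expand F ρ q).rootMultiplicity a = 0 :=
    Polynomial.rootMultiplicity_eq_zero (by
      rwa [Polynomial.IsRoot, Polynomial.expand_eval])
  have hexpand0 : Polynomial.expand F ρ f ≠ 0 := (Polynomial.expand_ne_zero hρ_pos).mpr hf
  rw [hexpand, Polynomial.rootMultiplicity_mul (hexpand ▸ hexpand0), rootMultiplicity_pow,
    hsimple, hq_expand, mul_one, add_zero]

lemma rootMultiplicity_le_natDegree [IsDomain A] (p : A[X]) (a : A) :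
    p.rootMultiplicity a ≤ p.natDegree := by
  classical
  rw [← Polynomial.count_roots]
  exact (Multiset.count_le_card a p.roots).trans p.card_roots'

lemma rootMultiplicity_X_pow_mul_expand_le {F : Type*} [Field F] {ρ : ℕ} (hρ : (ρ : F) ≠ 0)
    {f : F[X]} {a : F} (ha : a ≠ 0) (n : ℕ) :
    (Polynomial.X ^ n * Polynomial.expand F ρ f).rootMultiplicity a ≤ f.natDegree := by
  obtain rfl | hf := eq_or_ne f 0
  · simp
  have hρ_pos : 0 < ρ := Nat.pos_of_ne_zero fun h => hρ (by rw [h, Nat.cast_zero])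
  have hX : (Polynomial.X ^ n : F[X]).rootMultiplicity a = 0 :=
    Polynomial.rootMultiplicity_eq_zero (by simp [ha])
  rw [Polynomial.rootMultiplicity_mul (mul_ne_zero (pow_ne_zero n Polynomial.X_ne_zero)
      ((Polynomial.expand_ne_zero hρ_pos).mpr hf)),
    hX, zero_add, rootMultiplicity_expand_of_ne_zero hρ ha]
  exact rootMultiplicity_le_natDegree f _

end Univariate

section Bivariate

lemma coeff_X_mul_pderiv {τ B : Type*} [CommSemiring B] (P : MvPolynomial τ B) (i : τ)
    (m : τ →₀ ℕ) : coeff m (X i * pderiv i P) = m i * coeff m P := by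
  classical
  induction P using MvPolynomial.induction_on' with
  | monomial d b =>
    rw [X_mul_pderiv_monomial, coeff_smul, coeff_monomial, nsmul_eq_mul]
    split_ifs with h
    · rw [h]
    · simp
  | add P Q hP hQ => rw [map_add, mul_add, coeff_add, coeff_add, hP, hQ, mul_add]

-- Mathlib has Euler's identity only for natural number weights.
lemma sum_zsmul_X_mul_pderiv {τ B : Type*} [Fintype τ] [CommRing B] {w : τ → ℤ} {n : ℤ}
    {P : MvPolynomial τ B} (hP : P.IsWeightedHomogeneous w n) :
    ∑ i, w i • (X i * pderiv i P) = n • P := by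
  ext m
  simp only [coeff_sum, coeff_smul, coeff_X_mul_pderiv]
  by_cases hm : coeff m P = 0
  · simp [hm]
  · rw [← hP hm, Finsupp.weight_apply, Finsupp.sum_fintype _ _ (by simp), Finset.sum_smul]
    refine Finset.sum_congr rfl fun i _ => ?_
    rw [zsmul_eq_mul, zsmul_eq_mul, nsmul_eq_mul]
    push_cast
    ring

variable {F : Type*} [Field F] {ρ σ u w : ℤ} {P R G : MvPolynomial (Fin 2) F} {p q : ℕ × ℕ}

lemma weight_vecCons (ρ σ : ℤ) (m : Fin 2 →₀ ℕ) :
    Finsupp.weight ![ρ, σ] m = ρ * m 0 + σ * m 1 := by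
  rw [Finsupp.weight_apply, Finsupp.sum_fintype _ _ (by simp)]
  simp [Fin.sum_univ_two, mul_comm]

lemma single_add_single_eq (m : Fin 2 →₀ ℕ) :
    Finsupp.single 0 (m 0) + Finsupp.single 1 (m 1) = m := by
  ext j
  fin_cases j <;> simp

lemma mem_Supp_iff {m : Fin 2 →₀ ℕ} : (m 0, m 1) ∈ Supp P ↔ coeff m P ≠ 0 := by
  rw [Supp, Set.mem_ofPred, single_add_single_eq]

lemma Supp_nonempty (hP : P ≠ 0) : (Supp P).Nonempty := by
  obtain ⟨m, hm⟩ := exists_coeff_ne_zero hP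
  exact ⟨_, mem_Supp_iff.mpr hm⟩

lemma IsHomog.isWeightedHomogeneous (hP : IsHomog ρ σ P) (hp : p ∈ Supp P) :
    IsWeightedHomogeneous ![ρ, σ] P (ρ * p.1 + σ * p.2) := by
  intro m hm
  rw [weight_vecCons]
  exact hP _ (mem_Supp_iff.mpr hm) _ hp

lemma IsHomog.leadSupp_eq (hP : IsHomog ρ σ P) : LeadSupp ρ σ P = Supp P := by
  refine Set.Subset.antisymm (fun p hp => hp.1) fun p hp => ⟨hp, ?_⟩
  have hdegrees : {d : ℤ | ∃ q ∈ Supp P, d = ρ * (q.1 : ℤ) + σ * (q.2 : ℤ)} =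
      {ρ * (p.1 : ℤ) + σ * (p.2 : ℤ)} := by
    ext d
    exact ⟨fun ⟨q, hq, hd⟩ => hd.trans (hP q hq p hp), fun hd => ⟨p, hp, hd⟩⟩
  rw [wdeg, hdegrees, csSup_singleton]

lemma IsHomog.eq_of_snd_eq (hP : IsHomog ρ σ P) (hρ : ρ ≠ 0) (hp : p ∈ Supp P)
    (hq : q ∈ Supp P) (h : p.2 = q.2) : p = q := by
  have hweight := hP p hp q hq
  rw [h, add_left_inj] at hweight
  exact Prod.ext (by exact_mod_cast mul_left_cancel₀ hρ hweight) h

lemma IsHomog.snd_lt_snd (hP : IsHomog ρ σ P) (hρ : ρ ≠ 0) (hmono : ¬ IsMonomial P)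
    (hp : IsSt ρ σ P p) (hq : IsEn ρ σ P q) : p.2 < q.2 := by
  rw [IsSt, hP.leadSupp_eq] at hp
  rw [IsEn, hP.leadSupp_eq] at hq
  by_contra! hle
  refine hmono fun a ha b hb => hP.eq_of_snd_eq hρ ha hb ?_
  have := hp.2 a ha
  have := hq.2 a ha
  have := hp.2 b hb
  have := hq.2 b hb
  omega

lemma exists_sub_eq_mul_of_weight_eq {a b a' b' : ℤ} (hgcd : Int.gcd ρ σ = 1) (hρ : ρ ≠ 0)
    (h : ρ * a + σ * b = ρ * a' + σ * b') : ∃ k, a' - a = -σ * k ∧ b' - b = ρ * k := by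
  obtain ⟨k, hk⟩ : ρ ∣ b' - b :=
    (Int.isCoprime_iff_gcd_eq_one.mpr hgcd).dvd_of_dvd_mul_left ⟨a - a', by linarith⟩
  refine ⟨k, mul_left_cancel₀ hρ ?_, hk⟩
  linear_combination -h - σ * hk

lemma gcd_sub_sub_of_weight_eq {a b a' b' : ℤ} {n : ℕ} (hgcd : Int.gcd ρ σ = 1) (hρ : ρ ≠ 0)
    (h : ρ * a + σ * b = ρ * a' + σ * b') (hn : b' - b = ρ * n) :
    Int.gcd (a' - a) (b' - b) = n := by
  obtain ⟨k, ha, hb⟩ := exists_sub_eq_mul_of_weight_eq hgcd hρ h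
  have hk : k = n := mul_left_cancel₀ hρ (hb.symm.trans hn)
  rw [ha, hb, Int.gcd_mul_right, Int.neg_gcd, Int.gcd_comm, hgcd, one_mul, hk, Int.natAbs_natCast]

lemma weight_add_weight_eq_of_Jb_eq_pow {i : ℕ} (hG : IsWeightedHomogeneous ![ρ, σ] G w)
    (hR : IsWeightedHomogeneous ![ρ, σ] R u) (hR0 : R ≠ 0) (hbr : Jb G R = R ^ i) :
    w + u = i * u + (ρ + σ) := by
  have hterm {S T : MvPolynomial (Fin 2) F} {s t : ℤ} (hS : IsWeightedHomogeneous ![ρ, σ] S s)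
      (hT : IsWeightedHomogeneous ![ρ, σ] T t) :
      IsWeightedHomogeneous ![ρ, σ] (pderiv 0 S * pderiv 1 T) (s + t - (ρ + σ)) := by
    have h := (hS.pderiv (i := 0) (n' := s - ρ) (by simp)).mul
      (hT.pderiv (i := 1) (n' := t - σ) (by simp))
    rwa [sub_add_sub_comm] at h
  have hJb : IsWeightedHomogeneous ![ρ, σ] (R ^ i) (w + u - (ρ + σ)) := by
    rw [← hbr, Jb]
    exact (hterm hG hR).sub (add_comm u w ▸ hterm hR hG)
  have hweight := hJb.inj_right (pow_ne_zero i hR0) (hR.pow i)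
  rw [nsmul_eq_mul] at hweight
  linarith

lemma zsmul_X_mul_Jb (hG : IsWeightedHomogeneous ![ρ, σ] G w)
    (hR : IsWeightedHomogeneous ![ρ, σ] R u) :
    ρ • (X 0 * Jb G R) = w • (G * pderiv 1 R) - u • (R * pderiv 1 G) := by
  have hG' := sum_zsmul_X_mul_pderiv hG
  have hR' := sum_zsmul_X_mul_pderiv hR
  simp only [Fin.sum_univ_two, Matrix.cons_val_zero, Matrix.cons_val_one, zsmul_eq_mul]
    at hG' hR' ⊢
  rw [Jb]
  linear_combination pderiv 1 R * hG' - pderiv 1 G * hR'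

section Dehomogenize

variable {L : Type*} [Field L] [Algebra F L]

/-- The dehomogenization `P(1, y)` of `P`, with coefficients in an extension `L` of the ground field
so that its roots may be taken there. -/
def dehomogenize (L : Type*) [Field L] [Algebra F L] : MvPolynomial (Fin 2) F →ₐ[F] L[X] :=
  aeval ![1, Polynomial.X]

lemma derivative_dehomogenize (P : MvPolynomial (Fin 2) F) :
    derivative (dehomogenize L P) = dehomogenize L (pderiv 1 P) := by
  induction P using MvPolynomial.induction_on with
  | C a => simp [dehomogenize, Polynomial.algebraMap_apply]
  | add P Q hP hQ => simp only [map_add, hP, hQ]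
  | mul_X P j hP =>
    have hX : derivative (dehomogenize L (X j : MvPolynomial (Fin 2) F)) =
        dehomogenize L (pderiv 1 (X j : MvPolynomial (Fin 2) F)) := by
      fin_cases j <;> simp [dehomogenize]
    rw [map_mul, Polynomial.derivative_mul, hP, hX, pderiv_mul, map_add, map_mul, map_mul]

lemma weightedWronskian_dehomogenize (hG : IsWeightedHomogeneous ![ρ, σ] G w)
    (hR : IsWeightedHomogeneous ![ρ, σ] R u) :
    weightedWronskian (w : L) (u : L) (dehomogenize L G) (dehomogenize L R) =
      Polynomial.C (ρ : L) * dehomogenize L (Jb G R) := by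
  have h := congrArg (dehomogenize L) (zsmul_X_mul_Jb hG hR)
  have hX : dehomogenize L (X 0 : MvPolynomial (Fin 2) F) = 1 := by simp [dehomogenize]
  simp only [map_sub, map_mul, map_intCast, hX, one_mul, ← derivative_dehomogenize,
    zsmul_eq_mul] at h
  simp only [weightedWronskian, Polynomial.C_eq_intCast]
  linear_combination -h

lemma coeff_dehomogenize (P : MvPolynomial (Fin 2) F) (j : ℕ) :
    (dehomogenize L P).coeff j =
      ∑ m ∈ P.support, if m 1 = j then algebraMap F L (coeff m P) else 0 := by
  conv_lhs => rw [P.as_sum, map_sum, Polynomial.finsetSum_coeff]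
  refine Finset.sum_congr rfl fun m _ => ?_
  rw [dehomogenize, aeval_monomial, Finsupp.prod_fintype _ _ (by simp), Fin.prod_univ_two]
  simp [Polynomial.algebraMap_apply, Polynomial.coeff_X_pow, eq_comm]

lemma exists_mem_Supp_of_coeff_dehomogenize_ne_zero {j : ℕ}
    (h : (dehomogenize L P).coeff j ≠ 0) : ∃ a, (a, j) ∈ Supp P := by
  rw [coeff_dehomogenize] at h
  obtain ⟨m, hm, hmj⟩ := Finset.exists_ne_zero_of_sum_ne_zero h
  obtain rfl : m 1 = j := (ite_ne_right_iff.mp hmj).1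
  exact ⟨m 0, mem_Supp_iff.mpr (mem_support_iff.mp hm)⟩

lemma IsHomog.coeff_dehomogenize_ne_zero (hP : IsHomog ρ σ P) (hρ : ρ ≠ 0) (hp : p ∈ Supp P) :
    (dehomogenize L P).coeff p.2 ≠ 0 := by
  rw [coeff_dehomogenize, Finset.sum_eq_single (Finsupp.single 0 p.1 + Finsupp.single 1 p.2)]
  · simpa [Supp] using hp
  · refine fun m hm hne => if_neg fun hm1 => hne ?_
    have hmp := hP.eq_of_snd_eq hρ (mem_Supp_iff.mpr (mem_support_iff.mp hm)) hp hm1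
    rw [← hmp, single_add_single_eq]
  · exact fun h => absurd (notMem_support_iff.mp h) hp

lemma IsHomog.dehomogenize_ne_zero (hP : IsHomog ρ σ P) (hρ : ρ ≠ 0) (hP0 : P ≠ 0) :
    dehomogenize L P ≠ 0 := by
  obtain ⟨p, hp⟩ := Supp_nonempty hP0
  intro h
  exact hP.coeff_dehomogenize_ne_zero (L := L) hρ hp (by rw [h, Polynomial.coeff_zero])

lemma IsHomog.natTrailingDegree_dehomogenize (hP : IsHomog ρ σ P) (hρ : ρ ≠ 0)
    (hp : IsSt ρ σ P p) : (dehomogenize L P).natTrailingDegree = p.2 := by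
  rw [IsSt, hP.leadSupp_eq] at hp
  have hcoeff := hP.coeff_dehomogenize_ne_zero (L := L) hρ hp.1
  refine le_antisymm (Polynomial.natTrailingDegree_le_of_ne_zero hcoeff) ?_
  refine Polynomial.le_natTrailingDegree (fun h => hcoeff (by simp [h])) fun j hj => ?_
  by_contra hne
  obtain ⟨a, ha⟩ := exists_mem_Supp_of_coeff_dehomogenize_ne_zero hne
  exact hj.not_ge (hp.2 _ ha)

lemma IsHomog.natDegree_dehomogenize (hP : IsHomog ρ σ P) (hρ : ρ ≠ 0)
    (hp : IsEn ρ σ P p) : (dehomogenize L P).natDegree = p.2 := by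
  rw [IsEn, hP.leadSupp_eq] at hp
  refine Polynomial.natDegree_eq_of_le_of_coeff_ne_zero ?_
    (hP.coeff_dehomogenize_ne_zero hρ hp.1)
  rw [Polynomial.natDegree_le_iff_coeff_eq_zero]
  intro j hj
  by_contra hne
  obtain ⟨a, ha⟩ := exists_mem_Supp_of_coeff_dehomogenize_ne_zero hne
  exact hj.not_ge (hp.2 _ ha)

lemma IsHomog.exists_dehomogenize_eq_X_pow_mul_expand {ρ : ℕ} (hP : IsHomog ρ σ P)
    (hgcd : Int.gcd ρ σ = 1) (hρ : 0 < ρ) (hp : IsSt ρ σ P p) :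
    ∃ f, dehomogenize L P = Polynomial.X ^ p.2 * Polynomial.expand L ρ f := by
  rw [IsSt, hP.leadSupp_eq] at hp
  refine exists_eq_X_pow_mul_expand hρ.ne' fun j hj => ?_
  obtain ⟨a, ha⟩ := exists_mem_Supp_of_coeff_dehomogenize_ne_zero hj
  obtain ⟨k, -, hk⟩ :=
    exists_sub_eq_mul_of_weight_eq hgcd (by exact_mod_cast hρ.ne') (hP p hp.1 _ ha)
  have hle : p.2 ≤ j := hp.2 _ ha
  have hk_nonneg : 0 ≤ k := by
    refine nonneg_of_mul_nonneg_right ?_ (Nat.cast_pos (α := ℤ).mpr hρ)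
    rw [← hk]
    exact sub_nonneg.mpr (by exact_mod_cast hle)
  lift k to ℕ using hk_nonneg
  exact ⟨k, by exact_mod_cast sub_eq_iff_eq_add'.mp hk⟩

lemma IsHomog.rootMultiplicity_dehomogenize_le_gcd [CharZero L] {ρ : ℕ} (hP : IsHomog ρ σ P)
    (hgcd : Int.gcd ρ σ = 1) (hρ : 0 < ρ) (hp : IsSt ρ σ P p) (hq : IsEn ρ σ P q)
    {a : L} (ha : a ≠ 0) :
    (dehomogenize L P).rootMultiplicity a ≤ Int.gcd ((q.1 : ℤ) - p.1) ((q.2 : ℤ) - p.2) := by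
  have hρ' : (ρ : ℤ) ≠ 0 := by exact_mod_cast hρ.ne'
  obtain ⟨f, hf⟩ := hP.exists_dehomogenize_eq_X_pow_mul_expand (L := L) hgcd hρ hp
  have hf0 : f ≠ 0 := by
    rintro rfl
    refine hP.coeff_dehomogenize_ne_zero (L := L) hρ' hp.1.1 ?_
    rw [hf, map_zero, mul_zero, Polynomial.coeff_zero]
  have hdeg : q.2 = p.2 + f.natDegree * ρ := by
    rw [← hP.natDegree_dehomogenize (L := L) hρ' hq, hf,
      Polynomial.natDegree_mul (pow_ne_zero _ Polynomial.X_ne_zero)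
        ((Polynomial.expand_ne_zero hρ).mpr hf0),
      Polynomial.natDegree_X_pow, Polynomial.natDegree_expand]
  have hgap : (q.2 : ℤ) - p.2 = ρ * f.natDegree := by
    rw [hdeg]
    push_cast
    ring
  rw [gcd_sub_sub_of_weight_eq hgcd hρ' (hP p hp.1.1 q hq.1.1) hgap, hf]
  exact rootMultiplicity_X_pow_mul_expand_le (by exact_mod_cast hρ.ne') ha _

lemma dvd_gcd_mul_of_proportional {a b : ℕ} {c d : ℤ} (hρ : ρ ≠ 0) (hu : ρ * a + σ * b = u)
    (hw : ρ * c + σ * d = w) (h : w * b = u * d) : u ∣ Nat.gcd a b * w := by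
  have h' : w * a = u * c := mul_left_cancel₀ hρ (by linear_combination w * hu - u * hw - σ * h)
  refine ⟨Nat.gcdA a b * c + Nat.gcdB a b * d, ?_⟩
  rw [Nat.gcd_eq_gcd_ab]
  linear_combination Nat.gcdA a b * h' + Nat.gcdB a b * h

lemma IsHomog.dvd_gcd_mul_of_rootMultiplicity_zero_proportional (hR : IsHomog ρ σ R)
    (hG : IsWeightedHomogeneous ![ρ, σ] G w) (hρ : ρ ≠ 0) (hp : IsSt ρ σ R p)
    (hu : ρ * p.1 + σ * p.2 = u) (hG0 : dehomogenize L G ≠ 0)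
    (h : w * (dehomogenize L R).rootMultiplicity 0 = u * (dehomogenize L G).rootMultiplicity 0) :
    u ∣ Nat.gcd p.1 p.2 * w := by
  rw [Polynomial.rootMultiplicity_eq_natTrailingDegree', hR.natTrailingDegree_dehomogenize hρ hp,
    Polynomial.rootMultiplicity_eq_natTrailingDegree'] at h
  obtain ⟨c, hc⟩ := exists_mem_Supp_of_coeff_dehomogenize_ne_zero
    (Polynomial.trailingCoeff_nonzero_iff_nonzero.mpr hG0)
  have hcw := hG hc
  rw [weight_vecCons] at hcw
  exact dvd_gcd_mul_of_proportional hρ hu (by simpa using hcw) h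

lemma IsHomog.exists_rootMultiplicity_dehomogenize_proportional [IsAlgClosed L] [CharZero L]
    {k : ℕ} (hR : IsHomog ρ σ R) (hρ : ρ ≠ 0) (hmono : ¬ IsMonomial R) (hp : IsSt ρ σ R p)
    (hq : IsEn ρ σ R q) (hRu : IsWeightedHomogeneous ![ρ, σ] R u)
    (hGw : IsWeightedHomogeneous ![ρ, σ] G w) (hG0 : dehomogenize L G ≠ 0) (hu : 0 < u)
    (hw : w < k * u) (hbr : Jb G R = R ^ (k + 1)) :
    ∃ c : L, (c = 0 ∨ (dehomogenize L R).IsRoot c) ∧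
      w * (dehomogenize L R).rootMultiplicity c = u * (dehomogenize L G).rootMultiplicity c := by
  have hgap : (dehomogenize L R).natTrailingDegree < (dehomogenize L R).natDegree := by
    rw [hR.natTrailingDegree_dehomogenize hρ hp, hR.natDegree_dehomogenize hρ hq]
    exact hR.snd_lt_snd hρ hmono hp hq
  have hR0 : dehomogenize L R ≠ 0 := by
    intro h
    simp [h] at hgap
  have hsplits := IsAlgClosed.splits (dehomogenize L R)
  have hW := weightedWronskian_dehomogenize (L := L) hGw hRu
  rw [hbr, map_pow] at hW
  obtain ⟨b, hb0, hb⟩ := exists_ne_zero_isRoot hsplits hgap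
  obtain ⟨c, hc, hprop⟩ := exists_rootMultiplicity_proportional hu hw
    (Int.cast_ne_zero.mpr hρ) hG0 hR0 hsplits hW hb0.symm
  refine ⟨c, ?_, hprop⟩
  obtain hc | rfl | hc := hc
  exacts [Or.inl hc, Or.inr hb, Or.inr hc]

end Dehomogenize

theorem dvd_mul_weight_of_Jb_eq_pow [CharZero F] (hgcd : Int.gcd ρ σ = 1) (hρ : 0 < ρ)
    (hρσ : ρ + σ < 0) (hR : IsHomog ρ σ R) (hG : IsHomog ρ σ G) (hmono : ¬ IsMonomial R)
    {i : ℕ} (hi : 1 ≤ i) (hbr : Jb G R = R ^ i) (hp : IsSt ρ σ R p) (hq : IsEn ρ σ R q)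
    (hu : 0 < ρ * (p.1 : ℤ) + σ * p.2) :
    (∃ s : ℕ, 1 ≤ s ∧ s ≤ Int.gcd ((q.1 : ℤ) - p.1) ((q.2 : ℤ) - p.2) ∧
      ρ * (p.1 : ℤ) + σ * p.2 ∣ s * (ρ + σ)) ∨
    ρ * (p.1 : ℤ) + σ * p.2 ∣ Nat.gcd p.1 p.2 * (ρ + σ) := by
  lift ρ to ℕ using hρ.le
  obtain ⟨k, rfl⟩ := Nat.exists_eq_add_of_le' hi
  have hR0 : R ≠ 0 := by
    rintro rfl
    exact hp.1.1 (coeff_zero _)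
  have hG0 : G ≠ 0 := by
    rintro rfl
    refine pow_ne_zero (k + 1) hR0 ?_
    simp [← hbr, Jb]
  have hRu := hR.isWeightedHomogeneous hp.1.1
  obtain ⟨e, he⟩ := Supp_nonempty hG0
  have hGw := hG.isWeightedHomogeneous he
  generalize (ρ : ℤ) * e.1 + σ * e.2 = w at hGw
  set u : ℤ := ρ * p.1 + σ * p.2
  have hw : w = k * u + (ρ + σ) := by
    have h := weight_add_weight_eq_of_Jb_eq_pow hGw hRu hR0 hbr
    push_cast at h
    linarith
  have hdvd {s : ℤ} (h : u ∣ s * w) : u ∣ s * (ρ + σ) := by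
    rw [hw, mul_add] at h
    exact (dvd_add_right ⟨s * k, by ring⟩).mp h
  let L := AlgebraicClosure F
  have : CharZero L := charZero_of_injective_algebraMap (algebraMap F L).injective
  have hr0 := hR.dehomogenize_ne_zero (L := L) hρ.ne' hR0
  have hg0 := hG.dehomogenize_ne_zero (L := L) hρ.ne' hG0
  obtain ⟨c, hc, hprop⟩ := hR.exists_rootMultiplicity_dehomogenize_proportional hρ.ne' hmono hp hq
    hRu hGw hg0 hu (by linarith) hbr
  obtain rfl | hc0 := eq_or_ne c 0
  · exact Or.inr (hdvd
      (hR.dvd_gcd_mul_of_rootMultiplicity_zero_proportional hGw hρ.ne' hp rfl hg0 hprop))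
  · exact Or.inl ⟨_, (Polynomial.rootMultiplicity_pos hr0).mpr (hc.resolve_left hc0),
      hR.rootMultiplicity_dehomogenize_le_gcd hgcd (by exact_mod_cast hρ) hp hq hc0,
      hdvd ⟨_, (mul_comm _ _).trans hprop⟩⟩

end Bivariate

lemma exists_pos_lt_mul_of_dvd {u δ : ℤ} {ℓ s : ℕ} (hu : 0 < u) (hδ : δ < 0) (hs : 0 < s)
    (hℓ : 0 < ℓ * u + δ) (h : u ∣ s * δ) :
    ∃ t : ℕ, 0 < t ∧ (t : ℤ) < ℓ * s ∧ t * u + s * δ = 0 := by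
  obtain ⟨d, hd⟩ := h
  have hs' : (0 : ℤ) < s := by exact_mod_cast hs
  have hd_neg : d < 0 := by
    refine neg_of_mul_neg_right ?_ hu.le
    rw [← hd]
    exact mul_neg_of_pos_of_neg hs' hδ
  have hlt : -d < ℓ * s := by
    refine lt_of_mul_lt_mul_right ?_ hu.le
    linarith [mul_pos hs' hℓ]
  lift -d to ℕ using (neg_pos.mpr hd_neg).le with t ht
  refine ⟨t, by omega, hlt, ?_⟩
  rw [ht, hd]
  ring

theorem stmt10_general (ϱ ς : ℤ) (hgcd : Int.gcd ϱ ς = 1) (hϱ : 0 < ϱ) (hϱς : ϱ + ς < 0)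
    (R G : MvPolynomial (Fin 2) K)
    (hhomR : IsHomog ϱ ς R) (hhomG : IsHomog ϱ ς G)
    (hmono : ¬ IsMonomial R)
    (i : ℕ) (hi : 1 ≤ i) (hbr : Jb G R = R ^ i)
    (υ₂ ν₂ e₁ e₂ : ℕ) (hst : IsSt ϱ ς R (υ₂, ν₂)) (hen : IsEn ϱ ς R (e₁, e₂))
    (ℓ : ℕ) (hℓu : 0 < (ℓ : ℤ) * wdeg ϱ ς R + ϱ + ς) :
    (∃ s t' : ℕ, 1 ≤ s ∧ (s : ℤ) ≤ Int.gcd ((e₁ : ℤ) - (υ₂ : ℤ)) ((e₂ : ℤ) - (ν₂ : ℤ)) ∧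
        0 < t' ∧ (t' : ℤ) < (ℓ : ℤ) * s ∧
        (t' : ℤ) * (ϱ * (υ₂ : ℤ) + ς * (ν₂ : ℤ)) + (s : ℤ) * (ϱ + ς) = 0) ∨
    (∃ γ t' : ℕ, 1 ≤ γ ∧ γ ∣ Nat.gcd υ₂ ν₂ ∧
        0 < t' ∧ (t' : ℤ) < (ℓ : ℤ) * γ ∧
        (t' : ℤ) * (ϱ * (υ₂ : ℤ) + ς * (ν₂ : ℤ)) + (γ : ℤ) * (ϱ + ς) = 0) := by
  rw [← hst.1.2, add_assoc] at hℓu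
  have hu : 0 < ϱ * (υ₂ : ℤ) + ς * (ν₂ : ℤ) :=
    pos_of_mul_pos_right (by linarith : 0 < (ℓ : ℤ) * (ϱ * υ₂ + ς * ν₂)) ℓ.cast_nonneg
  obtain ⟨s, hs, hsN, hdvd⟩ | hdvd :=
    dvd_mul_weight_of_Jb_eq_pow hgcd hϱ hϱς hhomR hhomG hmono hi hbr hst hen hu
  · obtain ⟨t, ht⟩ := exists_pos_lt_mul_of_dvd hu hϱς hs hℓu hdvd
    exact Or.inl ⟨s, t, hs, by exact_mod_cast hsN, ht⟩
  · have hN₂ : 0 < Nat.gcd υ₂ ν₂ := by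
      by_contra! h
      obtain ⟨rfl, rfl⟩ := Nat.gcd_eq_zero_iff.mp (Nat.le_zero.mp h)
      simp at hu
    obtain ⟨t, ht⟩ := exists_pos_lt_mul_of_dvd hu hϱς hN₂ hℓu hdvd
    exact Or.inr ⟨_, t, hN₂, dvd_rfl, ht⟩

/-- Proposition "finitas direcciones". -/
theorem stmt10 (K : Type*) [Field K] [CharZero K]
    (ϱ ς : ℤ) (hgcd : Int.gcd ϱ ς = 1) (hϱ : 0 < ϱ) (hϱς : ϱ + ς < 0)
    (R G : MvPolynomial (Fin 2) K)
    (hhomR : IsHomog ϱ ς R) (hhomG : IsHomog ϱ ς G)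
    (hmono : ¬ IsMonomial R)
    (i : ℕ) (hi : 1 ≤ i) (hbr : Jb G R = R ^ i)
    (υ₂ ν₂ e₁ e₂ : ℕ) (hst : IsSt ϱ ς R (υ₂, ν₂)) (hen : IsEn ϱ ς R (e₁, e₂))
    (ℓ : ℕ) (hℓ : 1 ≤ ℓ) (hℓu : 0 < (ℓ : ℤ) * wdeg ϱ ς R + ϱ + ς) :
    -- case (1)
    (ϱ = 1 ∧ ∃ (ξ lam : K) (j c : ℕ), ξ ≠ 0 ∧ lam ≠ 0 ∧ 1 ≤ j ∧
        R = MvPolynomial.C ξ * MvPolynomial.X 0 ^ c *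
          (MvPolynomial.X 0 ^ (-ς).toNat * MvPolynomial.X 1 - MvPolynomial.C lam) ^ j) ∨
    -- case (2)
    (∃ s t' : ℕ, 1 ≤ s ∧ (s : ℤ) ≤ Int.gcd ((e₁ : ℤ) - (υ₂ : ℤ)) ((e₂ : ℤ) - (ν₂ : ℤ)) ∧
        0 < t' ∧ (t' : ℤ) < (ℓ : ℤ) * s ∧
        (t' : ℤ) * (ϱ * (υ₂ : ℤ) + ς * (ν₂ : ℤ)) + (s : ℤ) * (ϱ + ς) = 0) ∨
    -- case (3)
    (∃ γ t' : ℕ, 1 ≤ γ ∧ γ ∣ Nat.gcd υ₂ ν₂ ∧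
        0 < t' ∧ (t' : ℤ) < (ℓ : ℤ) * γ ∧
        (t' : ℤ) * (ϱ * (υ₂ : ℤ) + ς * (ν₂ : ℤ)) + (γ : ℤ) * (ϱ + ς) = 0) := by
  exact Or.inr (stmt10_general ϱ ς hgcd hϱ hϱς R G hhomR hhomG hmono i hi hbr υ₂ ν₂ e₁ e₂ hst hen ℓ
    hℓu)

end
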